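/- The class of finite groups all of whose subgroups are k-submodular is a hereditary formation: it is closed under taking subgroups, quotients, and if G/N_1 and G/N_2 belong to the class for normal subgroups N_1, N_2 of G, then G/(N_1 ∩ N_2) belongs to the class. -/

import Mathlib

open Pointwise

/-- A subgroup `H` of `K` is `n`-modularly embedded in `K` if either `H ◁ K`, or
`K/Core_K(H)` is a non-nilpotent group of order `p * q ^ n` with `|K : H| = p`
for some primes `p`, `q`. -/
def ModularlyEmbedded {G : Type*} [Group G] (n : ℕ) (H K : Subgroup G) : Prop :=
  H ≤ K ∧ ((H.subgroupOf K).Normal ∨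
    ∃ p q : ℕ, p.Prime ∧ q.Prime ∧
      ¬ Group.IsNilpotent (↥K ⧸ (H.subgroupOf K).normalCore) ∧
      Nat.card (↥K ⧸ (H.subgroupOf K).normalCore) = p * q ^ n ∧
      (H.subgroupOf K).index = p)

/-- `H` is `k`-submodular in `K` if there is a chain `H = H_0 ≤ H_1 ≤ ⋯ ≤ H_m = K`
such that `H_{i-1}` is `n_i`-modularly embedded in `H_i` for some natural number
`n_i ≤ k`, for every `i`. -/
def KSubmodularIn {G : Type*} [Group G] (k : ℕ) (H K : Subgroup G) : Prop :=
  ∃ (m : ℕ) (c : ℕ → Subgroup G), c 0 = H ∧ c m = K ∧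
    ∀ i < m, ∃ n : ℕ, 0 < n ∧ n ≤ k ∧ ModularlyEmbedded n (c i) (c (i + 1))

/-!
Let `G` be a finite group all of whose subgroups are `k`-submodular. The Sylow subgroup `T` for the
largest prime divisor `s` of `|G|` is normal: otherwise the last step of a chain from its normalizer
to `G` would, by the Frattini argument, be of the non-normal kind, and its prime index would be
congruent to `1` modulo `s`. Hence every minimal normal subgroup `A` of `G` has prime order and a
centralizer whose index divides a prime power `q ^ k`. Indeed, either `A` embeds in `G ⧸ T` and one
inducts, or `A ≤ T` is centralized by `T`, and a complement `M` of `T` is maximal in `M ⊔ A`,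
so that `M` is `n`-modularly embedded there for some `n ≤ k`.

Conversely, a group `G` belongs to the class as soon as `G ⧸ L` does for some such normal subgroup
`L`, because every `H` is then `k`-submodular in `H ⊔ L`. For subdirect products we may assume
`N₁ ⊓ N₂ = ⊥`. A minimal normal subgroup `L ≤ N₁` of `G` maps isomorphically to a minimal normal
subgroup of `G ⧸ N₂`, so it is of the above kind, and one passes to `G ⧸ L`, inducting on `|N₁|`.
-/

open Subgroup

section SubgroupLattice

variable {G : Type*} [Group G]

theorem sup_inf_assoc_of_le_of_normal {A B C : Subgroup G} [B.Normal] (h : A ≤ C) :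
    (A ⊔ B) ⊓ C = A ⊔ B ⊓ C := by
  refine le_antisymm (fun x hx => ?_)
    (le_inf (sup_le_sup_left inf_le_left A) (sup_le h inf_le_right))
  obtain ⟨a, ha, b, hb, rfl⟩ := mem_sup_of_normal_right.1 hx.1
  exact mul_mem_sup ha ⟨hb, (mul_mem_cancel_left (h ha)).1 hx.2⟩

theorem relIndex_sup_of_normal_right (H N : Subgroup G) [N.Normal] :
    H.relIndex (H ⊔ N) = H.relIndex N := by
  let φ := quotientSubgroupOfEmbeddingOfLE H (le_sup_right : N ≤ H ⊔ N)
  refine (Nat.card_congr (Equiv.ofBijective φ ⟨φ.injective, fun c => ?_⟩)).symm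
  obtain ⟨⟨g, hg⟩, rfl⟩ := QuotientGroup.mk_surjective c
  obtain ⟨n, hn, h, hh, rfl⟩ := mem_sup_of_normal_left.1 (sup_comm H N ▸ hg)
  refine ⟨QuotientGroup.mk ⟨n, hn⟩, QuotientGroup.eq.2 ?_⟩
  simpa [mem_subgroupOf] using hh

theorem disjoint_map_mk' {L N₁ N₂ : Subgroup G} [L.Normal] [N₂.Normal] (hL : L ≤ N₁)
    (hinf : N₁ ⊓ N₂ ≤ L) :
    Disjoint (N₁.map (QuotientGroup.mk' L)) (N₂.map (QuotientGroup.mk' L)) := by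
  refine disjoint_iff.2 (comap_injective (QuotientGroup.mk'_surjective L) ?_)
  rw [comap_inf, comap_map_eq, comap_map_eq, MonoidHom.comap_bot, QuotientGroup.ker_mk',
    sup_eq_left.2 hL, inf_comm, sup_comm, sup_inf_assoc_of_le_of_normal hL, inf_comm N₂,
    sup_eq_left.2 hinf]

theorem normalCore_comap_of_surjective {G' : Type*} [Group G'] {f : G →* G'}
    (hf : Function.Surjective f) (W : Subgroup G') :
    (W.comap f).normalCore = W.normalCore.comap f := by
  refine le_antisymm (fun x hx b => ?_) (normal_le_normalCore.2 (comap_mono W.normalCore_le))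
  obtain ⟨a, rfl⟩ := hf b
  simpa using hx a

theorem isSubnormal_of_isNilpotent [WellFoundedGT (Subgroup G)] [Group.IsNilpotent G]
    (W : Subgroup G) : W.IsSubnormal := by
  induction W using WellFoundedGT.induction with
  | _ W ih =>
    rcases eq_or_ne W ⊤ with rfl | hW
    · exact .top
    have hlt : W < normalizer (W : Set G) :=
      Group.normalizerCondition_of_isNilpotent W hW.lt_top
    exact .step W _ hlt.le (ih _ hlt) inferInstance

theorem isSubnormal_of_isNilpotent_quotient {N W : Subgroup G} [N.Normal]
    [WellFoundedGT (Subgroup (G ⧸ N))] [Group.IsNilpotent (G ⧸ N)] (hNW : N ≤ W) :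
    W.IsSubnormal := by
  have := (isSubnormal_of_isNilpotent (W.map (QuotientGroup.mk' N))).comap (QuotientGroup.mk' N)
  rwa [comap_map_eq_self (by rwa [QuotientGroup.ker_mk'])] at this

end SubgroupLattice

/-- `W` is `n`-modularly embedded in the whole group for some `0 < n ≤ k`. This is the relation
`ModularlyEmbedded` with the group itself, rather than a subgroup of it, on the right. -/
def IsKModular {G : Type*} [Group G] (k : ℕ) (W : Subgroup G) : Prop :=
  ∃ n, 0 < n ∧ n ≤ k ∧ (W.Normal ∨ ∃ p q : ℕ, p.Prime ∧ q.Prime ∧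
    ¬ Group.IsNilpotent (G ⧸ W.normalCore) ∧ Nat.card (G ⧸ W.normalCore) = p * q ^ n ∧ W.index = p)

/-- A single link `H ≤ K` of the chains that define `KSubmodularIn k`. -/
def KModularStep {G : Type*} [Group G] (k : ℕ) (H K : Subgroup G) : Prop :=
  H ≤ K ∧ IsKModular k (H.subgroupOf K)

/-- The class of groups all of whose subgroups are `k`-submodular. -/
def AllKSubmodular (k : ℕ) (G : Type*) [Group G] : Prop :=
  ∀ H : Subgroup G, KSubmodularIn k H ⊤

section Chains

variable {G G' : Type*} [Group G] [Group G'] {k : ℕ}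

theorem isKModular_comap_iff {f : G →* G'} (hf : Function.Surjective f) {W : Subgroup G'} :
    IsKModular k (W.comap f) ↔ IsKModular k W := by
  have hker : (W.comap f).normalCore = ((QuotientGroup.mk' W.normalCore).comp f).ker := by
    rw [normalCore_comap_of_surjective hf, ← MonoidHom.comap_ker, QuotientGroup.ker_mk']
  let e : G ⧸ (W.comap f).normalCore ≃* G' ⧸ W.normalCore :=
    (QuotientGroup.quotientMulEquivOfEq hker).trans
      (QuotientGroup.quotientKerEquivOfSurjective _ ((QuotientGroup.mk'_surjective _).comp hf))
  have hnormal : (W.comap f).Normal ↔ W.Normal :=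
    ⟨fun h => map_comap_eq_self_of_surjective hf W ▸ h.map f hf, fun h => h.comap f⟩
  simp only [IsKModular, hnormal, Group.isNilpotent_congr e, Nat.card_congr e.toEquiv,
    index_comap_of_surjective W hf]

theorem IsKModular.of_normal {W : Subgroup G} [hW : W.Normal] (hk : 0 < k) : IsKModular k W :=
  ⟨1, one_pos, hk, .inl hW⟩

theorem IsKModular.pos {W : Subgroup G} (h : IsKModular k W) : 0 < k := by
  obtain ⟨n, hn, hnk, -⟩ := h
  exact hn.trans_le hnk

theorem IsKModular.normal_or_exists_relIndex_dvd {W : Subgroup G} (h : IsKModular k W) :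
    W.Normal ∨ ∃ p q : ℕ, p.Prime ∧ q.Prime ∧ W.index = p ∧
      W.normalCore.relIndex W ∣ q ^ k := by
  obtain ⟨n, -, hnk, hW | ⟨p, q, hp, hq, -, hcard, hidx⟩⟩ := h
  · exact .inl hW
  refine .inr ⟨p, q, hp, hq, hidx, ?_⟩
  have hmul : p * W.normalCore.relIndex W = p * q ^ n := by
    rw [← hcard, mul_comm, ← hidx, relIndex_mul_index W.normalCore_le, index]
  exact Nat.eq_of_mul_eq_mul_left hp.pos hmul ▸ pow_dvd_pow q hnk

theorem kModularStep_top_iff {W : Subgroup G} : KModularStep k W ⊤ ↔ IsKModular k W :=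
  (and_iff_right le_top).trans (isKModular_comap_iff topEquiv.surjective)

theorem KModularStep.map {f : G →* G'} {A B : Subgroup G} (hker : f.ker ≤ A)
    (h : KModularStep k A B) : KModularStep k (A.map f) (B.map f) := by
  refine ⟨map_mono h.1, (isKModular_comap_iff (f.subgroupMap_surjective B)).1 ?_⟩
  have hcomap : ((A.map f).subgroupOf (B.map f)).comap (f.subgroupMap B) = A.subgroupOf B :=
    congrArg (comap B.subtype) (comap_map_eq_self hker)
  exact hcomap ▸ h.2

theorem kSubmodularIn_iff_reflTransGen {H K : Subgroup G} :
    KSubmodularIn k H K ↔ Relation.ReflTransGen (KModularStep k) H K := by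
  have hstep {A B : Subgroup G} :
      (∃ n, 0 < n ∧ n ≤ k ∧ ModularlyEmbedded n A B) ↔ KModularStep k A B :=
    ⟨fun ⟨n, hn, hnk, hle, h⟩ => ⟨hle, n, hn, hnk, h⟩,
      fun ⟨hle, n, hn, hnk, h⟩ => ⟨n, hn, hnk, hle, h⟩⟩
  simp only [KSubmodularIn, hstep]
  constructor
  · rintro ⟨m, c, rfl, rfl, hc⟩
    induction m with
    | zero => exact .refl
    | succ m ih => exact (ih fun i hi => hc i (by lia)).tail (hc m (by lia))
  · intro h
    induction h using Relation.ReflTransGen.head_induction_on with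
    | refl => exact ⟨0, fun _ => K, rfl, rfl, by simp⟩
    | @head A B hAB _ ih =>
      obtain ⟨m, c, rfl, hm, hc⟩ := ih
      refine ⟨m + 1, fun i => i.casesOn A c, rfl, hm, fun i hi => ?_⟩
      cases i with
      | zero => exact hAB
      | succ i => exact hc i (by lia)

namespace KSubmodularIn

theorem refl (H : Subgroup G) : KSubmodularIn k H H :=
  kSubmodularIn_iff_reflTransGen.2 .refl

theorem trans {H K L : Subgroup G} (h₁ : KSubmodularIn k H K) (h₂ : KSubmodularIn k K L) :
    KSubmodularIn k H L :=
  kSubmodularIn_iff_reflTransGen.2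
    ((kSubmodularIn_iff_reflTransGen.1 h₁).trans (kSubmodularIn_iff_reflTransGen.1 h₂))

theorem of_step {H K : Subgroup G} (h : KModularStep k H K) : KSubmodularIn k H K :=
  kSubmodularIn_iff_reflTransGen.2 (.single h)

@[elab_as_elim]
theorem induction {H : Subgroup G} {motive : ∀ K, KSubmodularIn k H K → Prop}
    (refl : motive H (refl H))
    (tail : ∀ {A B} (hHA : KSubmodularIn k H A) (hAB : KModularStep k A B),
      motive A hHA → motive B (hHA.trans (of_step hAB)))
    {K : Subgroup G} (h : KSubmodularIn k H K) : motive K h := by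
  have hchain := kSubmodularIn_iff_reflTransGen.1 h
  induction hchain with
  | refl => exact refl
  | tail hHA hAB ih => exact tail (kSubmodularIn_iff_reflTransGen.2 hHA) hAB (ih _)

theorem le {H K : Subgroup G} (h : KSubmodularIn k H K) : H ≤ K := by
  induction h using KSubmodularIn.induction with
  | refl => exact le_rfl
  | tail _ hAB ih => exact ih.trans hAB.1

theorem exists_step_of_ne {H K : Subgroup G} (h : KSubmodularIn k H K) (hne : H ≠ K) :
    ∃ W, H ≤ W ∧ W ≠ K ∧ KModularStep k W K := by
  induction h using KSubmodularIn.induction with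
  | refl => exact absurd rfl hne
  | @tail A B hHA hAB ih =>
    rcases eq_or_ne A B with rfl | hne'
    · exact ih hne
    · exact ⟨A, hHA.le, hne', hAB⟩

theorem map {f : G →* G'} {A B : Subgroup G} (hker : f.ker ≤ A) (h : KSubmodularIn k A B) :
    KSubmodularIn k (A.map f) (B.map f) := by
  induction h using KSubmodularIn.induction with
  | refl => exact refl _
  | tail hAC hCD ih => exact ih.trans (of_step (hCD.map (hker.trans hAC.le)))

theorem of_subgroupOf {H K : Subgroup G} (hHK : H ≤ K)
    (h : KSubmodularIn k (H.subgroupOf K) ⊤) : KSubmodularIn k H K := by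
  have := h.map (f := K.subtype) (by simp)
  rwa [← MonoidHom.range_eq_map, range_subtype, subgroupOf_map_subtype, inf_eq_left.2 hHK] at this

theorem of_isSubnormal (hk : 0 < k) {H : Subgroup G} (hH : H.IsSubnormal) :
    KSubmodularIn k H ⊤ := by
  induction hH with
  | top => exact refl ⊤
  | step H K hle _ hnormal ih => exact (of_step ⟨hle, .of_normal hk⟩).trans ih

end KSubmodularIn

end Chains

section Inheritance

variable {G G' : Type*} [Group G] [Group G'] {k : ℕ}

theorem eq_mul_prime_pow_of_dvd_of_ne_prime_pow {p q k m : ℕ} (hp : p.Prime) (hq : q.Prime)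
    (hdvd : m ∣ p * q ^ k) (hm : ∀ r n : ℕ, r.Prime → m ≠ r ^ n) :
    p ≠ q ∧ ∃ n, 0 < n ∧ n ≤ k ∧ m = p * q ^ n := by
  obtain ⟨a, b, ha, hb, rfl⟩ := Nat.dvd_mul.1 hdvd
  obtain ⟨n, hnk, rfl⟩ := (Nat.dvd_prime_pow hq).1 hb
  obtain rfl | rfl := (Nat.dvd_prime hp).1 ha
  · exact absurd (one_mul _) (hm q n hq)
  refine ⟨?_, n, Nat.pos_of_ne_zero ?_, hnk, rfl⟩
  · rintro rfl
    exact hm a (n + 1) hp (pow_succ' a n).symm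
  · rintro rfl
    exact hm a 1 hp (by simp)

theorem kSubmodularIn_top_of_index_dvd (hk : 0 < k) {p q : ℕ} (hp : p.Prime) (hq : q.Prime)
    {D W : Subgroup G} [D.Normal] (hDW : D ≤ W) (hD : D.index ∣ p * q ^ k)
    (hrel : D.relIndex W ∣ q ^ k) (hW : W.index ≤ p) : KSubmodularIn k W ⊤ := by
  have hcore : D ≤ W.normalCore := normal_le_normalCore.2 hDW
  have hindex : W.normalCore.index ∣ p * q ^ k := (index_dvd_of_le hcore).trans hD
  have hindex_ne : W.normalCore.index ≠ 0 :=
    ne_zero_of_dvd_ne_zero (mul_ne_zero hp.ne_zero (pow_ne_zero k hq.ne_zero)) hindex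
  have : Finite (G ⧸ W.normalCore) := Nat.finite_of_card_ne_zero hindex_ne
  by_cases hnil : Group.IsNilpotent (G ⧸ W.normalCore)
  · exact .of_isSubnormal hk (isSubnormal_of_isNilpotent_quotient W.normalCore_le)
  have hnot_pow (r n : ℕ) (hr : r.Prime) : W.normalCore.index ≠ r ^ n := fun h =>
    have := Fact.mk hr
    hnil (IsPGroup.of_card h).isNilpotent
  obtain ⟨hpq, n, hn, hnk, hcard⟩ := eq_mul_prime_pow_of_dvd_of_ne_prime_pow hp hq hindex hnot_pow
  have hmul := relIndex_mul_index W.normalCore_le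
  have hdvd : p ∣ W.index := by
    have hcop : p.Coprime (W.normalCore.relIndex W) :=
      .coprime_dvd_right ((relIndex_dvd_of_le_left W hcore).trans hrel)
        (.pow_right k ((Nat.coprime_primes hp hq).2 hpq))
    exact hcop.dvd_of_dvd_mul_left (hmul ▸ hcard ▸ dvd_mul_right p _)
  have hindex_eq : W.index = p := le_antisymm hW <|
    Nat.le_of_dvd (Nat.pos_of_ne_zero (right_ne_zero_of_mul (hmul ▸ hindex_ne))) hdvd
  exact .of_step (kModularStep_top_iff.2 ⟨n, hn, hnk, .inr ⟨p, q, hp, hq, hnil, hcard, hindex_eq⟩⟩)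

theorem IsKModular.kSubmodularIn_comap {W : Subgroup G'} (h : IsKModular k W) (f : G →* G') :
    KSubmodularIn k (W.comap f) ⊤ := by
  obtain hW | ⟨p, q, hp, hq, hindex, hrel⟩ := h.normal_or_exists_relIndex_dvd
  · exact .of_step (kModularStep_top_iff.2 (.of_normal h.pos))
  refine kSubmodularIn_top_of_index_dvd h.pos hp hq (comap_mono W.normalCore_le) ?_ ?_ ?_
  · rw [index_comap]
    refine (relIndex_dvd_index_of_normal _ _).trans ?_
    rw [← relIndex_mul_index W.normalCore_le, hindex, mul_comm]
    exact mul_dvd_mul_left p hrel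
  · rw [relIndex_comap, ← relIndex_subgroupOf (map_comap_le f W)]
    exact (relIndex_dvd_index_of_normal _ _).trans hrel
  · rw [index_comap, ← hindex, ← relIndex_top_right]
    exact relIndex_le_of_le_right le_top (by rw [relIndex_top_right, hindex]; exact hp.ne_zero)

theorem KSubmodularIn.comap {A B : Subgroup G'} (h : KSubmodularIn k A B) (f : G →* G') :
    KSubmodularIn k (A.comap f) (B.comap f) := by
  induction h using KSubmodularIn.induction with
  | refl => exact refl _
  | @tail C D _ hCD ih =>
    exact ih.trans
      (.of_subgroupOf (comap_mono hCD.1) (hCD.2.kSubmodularIn_comap (f.subgroupComap D)))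

namespace AllKSubmodular

theorem of_injective (h : AllKSubmodular k G') {f : G →* G'} (hf : Function.Injective f) :
    AllKSubmodular k G := fun H => by
  have hcomap := (h (H.map f)).comap f
  rwa [comap_map_eq_self_of_injective hf, comap_top] at hcomap

theorem of_surjective (h : AllKSubmodular k G) {f : G →* G'} (hf : Function.Surjective f) :
    AllKSubmodular k G' := fun H => by
  have hmap := (h (H.comap f)).map (f := f) (ker_le_comap f H)
  rwa [map_comap_eq_self_of_surjective hf, map_top_of_surjective f hf] at hmap

theorem kSubmodularIn_of_le (h : AllKSubmodular k G) {H K : Subgroup G} (hHK : H ≤ K) :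
    KSubmodularIn k H K :=
  .of_subgroupOf hHK (h.of_injective K.subtype_injective (H.subgroupOf K))

theorem quotient_map_mk' {N : Subgroup G} [N.Normal] (h : AllKSubmodular k (G ⧸ N))
    (L : Subgroup G) [L.Normal] :
    AllKSubmodular k ((G ⧸ L) ⧸ N.map (QuotientGroup.mk' L)) := by
  have hle : N ≤ (N.map (QuotientGroup.mk' L)).comap (QuotientGroup.mk' L) := le_comap_map _ _
  refine h.of_surjective (f := QuotientGroup.map N _ (QuotientGroup.mk' L) hle) ?_
  exact QuotientGroup.map_surjective_of_surjective _ _ _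
    ((QuotientGroup.mk_surjective).comp (QuotientGroup.mk'_surjective L)) hle

end AllKSubmodular

end Inheritance

section SylowTower

variable {G : Type*} [Group G] {k s : ℕ}

theorem index_modEq_one_of_normalizer_sylow_le [Finite G] [Fact s.Prime] (T : Sylow s G)
    {W : Subgroup G} (hW : normalizer (T : Set G) ≤ W) : W.index ≡ 1 [MOD s] := by
  have hTW : (T : Subgroup G) ≤ W := le_normalizer.trans hW
  have hindex : (normalizer (T : Set G)).index ≡ 1 [MOD s] :=
    T.card_eq_index_normalizer ▸ card_sylow_modEq_one s G
  have hrel : (normalizer (T : Set G)).relIndex W ≡ 1 [MOD s] := by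
    have hcard := (T.subtype hTW).card_eq_index_normalizer ▸ card_sylow_modEq_one s W
    rwa [← Sylow.coe_coe, T.coe_subtype, ← subgroupOf_normalizer_eq hTW] at hcard
  calc W.index = 1 * W.index := (one_mul _).symm
    _ ≡ (normalizer (T : Set G)).relIndex W * W.index [MOD s] := hrel.symm.mul_right _
    _ = (normalizer (T : Set G)).index := relIndex_mul_index hW
    _ ≡ 1 [MOD s] := hindex

theorem AllKSubmodular.normal_sylow [Finite G] (h : AllKSubmodular k G) [Fact s.Prime]
    (hmax : ∀ r : ℕ, r.Prime → r ∣ Nat.card G → r ≤ s) (T : Sylow s G) :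
    (T : Subgroup G).Normal := by
  rw [← normalizer_eq_top_iff]
  by_contra hne
  obtain ⟨W, hNW, hW, hstep⟩ := (h _).exists_step_of_ne hne
  obtain hnormal | ⟨p, -, hp, -, hindex, -⟩ :=
    (kModularStep_top_iff.1 hstep).normal_or_exists_relIndex_dvd
  · have hfrattini := T.normalizer_sup_eq_top' (le_normalizer.trans hNW)
    rw [T.coe_coe] at hNW
    exact hW (by rwa [sup_eq_right.2 hNW] at hfrattini)
  have hmod : p ≡ 1 [MOD s] := hindex ▸ index_modEq_one_of_normalizer_sylow_le T hNW
  have hdvd : s ∣ p - 1 := (Nat.modEq_iff_dvd' hp.one_le).1 hmod.symm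
  have hle : p ≤ s := hmax p hp (hindex ▸ W.index_dvd_card)
  have := Nat.le_of_dvd (Nat.sub_pos_of_lt hp.one_lt) hdvd
  have := hp.one_lt
  lia

theorem AllKSubmodular.exists_normal_sylow [Finite G] [Nontrivial G] (h : AllKSubmodular k G) :
    ∃ (s : ℕ) (_ : Fact s.Prime) (T : Sylow s G),
      (T : Subgroup G).Normal ∧ (T : Subgroup G) ≠ ⊥ := by
  have hne : (Nat.card G).primeFactors.Nonempty := Nat.nonempty_primeFactors.2 Finite.one_lt_card
  have hmem := Finset.max'_mem _ hne
  have := Fact.mk (Nat.prime_of_mem_primeFactors hmem)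
  let T : Sylow ((Nat.card G).primeFactors.max' hne) G := default
  refine ⟨_, this, T, h.normal_sylow (fun r hr hdvd => ?_) T,
    T.ne_bot_of_dvd_card (Nat.dvd_of_mem_primeFactors hmem)⟩
  exact Finset.le_max' _ _ (Nat.mem_primeFactors.2 ⟨hr, hdvd, Nat.card_pos.ne'⟩)

end SylowTower

/-- Minimal normal subgroups: the minimal elements among the nontrivial normal subgroups. -/
def IsMinimalNormal {G : Type*} [Group G] (A : Subgroup G) : Prop :=
  Minimal (fun B : Subgroup G => B.Normal ∧ B ≠ ⊥) A

section MinimalNormal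

variable {G G' : Type*} [Group G] [Group G']

theorem le_centralizer_of_disjoint {H K : Subgroup G} (hH : H ≤ normalizer (K : Set G))
    (hK : K ≤ normalizer (H : Set G)) (hdisj : Disjoint H K) :
    H ≤ centralizer (K : Set G) :=
  commutator_eq_bot_iff_le_centralizer.1 <| le_bot_iff.1 <| hdisj
    (le_normalizer_iff_commutator_le_left.1 hK) (le_normalizer_iff_commutator_le_right.1 hH)

theorem eq_bot_of_le_commutator {B T : Subgroup G} [hT : Group.IsNilpotent T] (hBT : B ≤ T)
    (h : B ≤ ⁅B, T⁆) : B = ⊥ := by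
  obtain ⟨n, hn⟩ := (isNilpotent_iff_lowerCentralSeries T).1 hT
  suffices ∀ m, B ≤ T.lowerCentralSeries m from le_bot_iff.1 (hn ▸ this n)
  intro m
  induction m with
  | zero => exact hBT
  | succ m ih => exact h.trans (commutator_mono ih le_rfl)

theorem comap_centralizer_map_le {f : G →* G'} {A : Subgroup G} [A.Normal]
    (hdisj : Disjoint f.ker A) :
    (centralizer (A.map f : Set G')).comap f ≤ centralizer (A : Set G) := by
  rw [← commutator_eq_bot_iff_le_centralizer, ← le_bot_iff]
  refine hdisj ?_ (commutator_le_right _ _)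
  rw [← Subgroup.map_eq_bot_iff, map_commutator, commutator_eq_bot_iff_le_centralizer]
  exact map_comap_le _ _

theorem exists_isMinimalNormal_le {N : Subgroup G} [Finite N] [hN : N.Normal] (hne : N ≠ ⊥) :
    ∃ L ≤ N, IsMinimalNormal L := by
  obtain ⟨L, ⟨hL, hLne, hLN⟩, hmin⟩ := exists_minimalFor_of_wellFoundedLT
    (fun B : Subgroup G => B.Normal ∧ B ≠ ⊥ ∧ B ≤ N) (fun B => Nat.card B) ⟨N, hN, hne, le_rfl⟩
  have : Finite L := Finite.Set.subset (N : Set G) hLN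
  refine ⟨L, hLN, ⟨hL, hLne⟩, fun B ⟨hB, hBne⟩ hBL => ?_⟩
  have hcard := hmin ⟨hB, hBne, hBL.trans hLN⟩ (card_le_of_le hBL)
  exact (eq_of_le_of_card_ge hBL hcard).ge

namespace IsMinimalNormal

variable {A : Subgroup G}

theorem normal (hA : IsMinimalNormal A) : A.Normal := hA.prop.1

theorem ne_bot (hA : IsMinimalNormal A) : A ≠ ⊥ := hA.prop.2

theorem eq_bot_or_eq (hA : IsMinimalNormal A) {B : Subgroup G} [hB : B.Normal] (hBA : B ≤ A) :
    B = ⊥ ∨ B = A :=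
  or_iff_not_imp_left.2 fun hne => hA.eq_of_le ⟨hB, hne⟩ hBA

theorem disjoint_or_le (hA : IsMinimalNormal A) (N : Subgroup G) [N.Normal] :
    Disjoint N A ∨ A ≤ N := by
  have := hA.normal
  rw [disjoint_iff, ← inf_eq_right]
  exact hA.eq_bot_or_eq inf_le_right

theorem map (hA : IsMinimalNormal A) {f : G →* G'} (hf : Function.Surjective f)
    (hdisj : Disjoint f.ker A) : IsMinimalNormal (A.map f) := by
  have hnormal := hA.normal
  refine ⟨⟨hnormal.map f hf, fun h => hA.ne_bot ?_⟩, fun B ⟨hB, hBne⟩ hBA => ?_⟩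
  · exact hdisj.symm.eq_bot_of_le ((Subgroup.map_eq_bot_iff A).1 h)
  rw [map_le_iff_le_comap]
  refine (hA.disjoint_or_le (B.comap f)).resolve_left fun hdisjB => hBne (le_bot_iff.1 ?_)
  intro b hb
  obtain ⟨a, ha, rfl⟩ := hBA hb
  rw [hdisjB.le_bot ⟨hb, ha⟩, map_one]
  exact one_mem _

theorem le_centralizer_of_isNilpotent (hA : IsMinimalNormal A) {T : Subgroup G} [T.Normal]
    [Group.IsNilpotent T] (hAT : A ≤ T) : T ≤ centralizer (A : Set G) := by
  have := hA.normal
  rw [← commutator_eq_bot_iff_le_centralizer, commutator_comm]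
  refine (hA.eq_bot_or_eq (commutator_le_left A T)).resolve_right fun h => ?_
  exact hA.ne_bot (eq_bot_of_le_commutator hAT h.ge)

theorem prime_card_of_centralizer_eq_top [Finite A] (hA : IsMinimalNormal A)
    (hcent : centralizer (A : Set G) = ⊤) : (Nat.card A).Prime := by
  obtain ⟨p, hp, hdvd⟩ := Nat.exists_prime_and_dvd (one_lt_card_iff_ne_bot A |>.2 hA.ne_bot).ne'
  have := Fact.mk hp
  obtain ⟨a, ha⟩ := exists_prime_orderOf_dvd_card' p hdvd
  have hle : zpowers (a : G) ≤ A := by simp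
  have : (zpowers (a : G)).Normal := normalizer_eq_top_iff.1 <| top_le_iff.1 <|
    hcent ▸ (centralizer_le hle).trans (centralizer_le_normalizer _)
  obtain h | h := hA.eq_bot_or_eq hle
  · rw [zpowers_eq_bot, OneMemClass.coe_eq_one, ← orderOf_eq_one_iff, ha] at h
    exact absurd h hp.ne_one
  · rwa [← h, Nat.card_zpowers, orderOf_coe, ha]

theorem eq_or_eq_sup_of_le (hA : IsMinimalNormal A) {M W : Subgroup G}
    (hM : M ⊔ centralizer (A : Set G) = ⊤) (hMW : M ≤ W) (hW : W ≤ M ⊔ A) :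
    W = M ∨ W = M ⊔ A := by
  have hnormal := hA.normal
  have hinf : (A ⊓ W).Normal := by
    rw [← normalizer_eq_top_iff, ← top_le_iff, ← hM]
    refine sup_le ?_ ?_
    · exact (le_inf le_normalizer_of_normal (hMW.trans le_normalizer)).trans
        inf_normalizer_le_normalizer_inf
    · exact (centralizer_le inf_le_left).trans (centralizer_le_normalizer _)
  have hdedekind : W = M ⊔ A ⊓ W := by
    rw [← sup_inf_assoc_of_le_of_normal hMW, inf_eq_right.2 hW]
  obtain h | h := hA.eq_bot_or_eq (B := A ⊓ W) inf_le_left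
  · exact .inl (by rwa [h, sup_bot_eq] at hdedekind)
  · exact .inr (by rwa [h] at hdedekind)

end IsMinimalNormal

end MinimalNormal

/-- A subgroup `A` of prime order whose centralizer has index dividing `q ^ k` for some prime `q`.
For normal `A` this index is the order of the group of automorphisms of `A` induced by conjugation
in `G`; the minimal normal subgroups of the finite groups in the class are all of this kind. -/
def IsKPrimary {G : Type*} [Group G] (k : ℕ) (A : Subgroup G) : Prop :=
  (Nat.card A).Prime ∧ ∃ q : ℕ, q.Prime ∧ (centralizer (A : Set G)).index ∣ q ^ k

section Primary

variable {G G' : Type*} [Group G] [Group G'] {k : ℕ} {A : Subgroup G}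

theorem relIndex_eq_card_of_disjoint {H K : Subgroup G} (h : Disjoint H K) :
    H.relIndex K = Nat.card K := by
  rw [← inf_relIndex_right, h.eq_bot, relIndex_bot_left]

theorem relIndex_lt_card_of_ne_bot {L N : Subgroup G} [Finite N] (hLN : L ≤ N) (hL : L ≠ ⊥) :
    L.relIndex N < Nat.card N := by
  have : Finite L := Finite.Set.subset (N : Set G) hLN
  have hmul : Nat.card L * L.relIndex N = Nat.card N := by
    simpa only [relIndex_bot_left] using relIndex_mul_relIndex ⊥ L N bot_le hLN
  have hpos : 0 < L.relIndex N := Nat.pos_of_mul_pos_left (hmul ▸ Nat.card_pos)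
  exact hmul ▸ lt_mul_of_one_lt_left hpos ((one_lt_card_iff_ne_bot L).2 hL)

theorem index_lt_card_of_ne_bot [Finite G] {N : Subgroup G} (hN : N ≠ ⊥) :
    N.index < Nat.card G := by
  simpa using relIndex_lt_card_of_ne_bot (le_top : N ≤ ⊤) hN

theorem IsKPrimary.of_map [A.Normal] {f : G →* G'} (hf : Function.Surjective f)
    (hdisj : Disjoint f.ker A) (h : IsKPrimary k (A.map f)) : IsKPrimary k A := by
  obtain ⟨hprime, q, hq, hdvd⟩ := h
  refine ⟨?_, q, hq, (index_dvd_of_le (comap_centralizer_map_le hdisj)).trans ?_⟩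
  · rwa [← relIndex_ker, relIndex_eq_card_of_disjoint hdisj] at hprime
  · rwa [index_comap_of_surjective _ hf]

theorem IsMinimalNormal.isKPrimary_of_quotient (hA : IsMinimalNormal A) {N : Subgroup G}
    [N.Normal] (hdisj : Disjoint N A)
    (h : ∀ B : Subgroup (G ⧸ N), IsMinimalNormal B → IsKPrimary k B) : IsKPrimary k A := by
  have := hA.normal
  have hsurj := QuotientGroup.mk'_surjective N
  have hdisj_ker : Disjoint (QuotientGroup.mk' N).ker A := by rwa [QuotientGroup.ker_mk']
  exact .of_map hsurj hdisj_ker (h _ (hA.map hsurj hdisj_ker))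

theorem index_centralizer_dvd_relIndex [A.Normal] {M D : Subgroup G}
    (hM : M ⊔ centralizer (A : Set G) = ⊤) (hdisj : Disjoint M A) (hDM : D ≤ M)
    (hD : A ≤ normalizer (D : Set G)) :
    (centralizer (A : Set G)).index ∣ D.relIndex M := by
  have hcent : D ≤ centralizer (A : Set G) :=
    le_centralizer_of_disjoint le_normalizer_of_normal hD (hdisj.mono_left hDM)
  rw [← relIndex_top_right, ← hM, relIndex_sup_right]
  exact relIndex_dvd_of_le_left M hcent

theorem IsMinimalNormal.isKPrimary_of_kModularStep [Finite A] (hA : IsMinimalNormal A)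
    {M : Subgroup G} (hM : M ⊔ centralizer (A : Set G) = ⊤) (hdisj : Disjoint M A)
    (hstep : KModularStep k M (M ⊔ A)) : IsKPrimary k A := by
  have hnormal := hA.normal
  obtain hMnormal | ⟨p, q, hp, hq, hindex, hrel⟩ := hstep.2.normal_or_exists_relIndex_dvd
  · have hAM : A ≤ normalizer (M : Set G) :=
      le_sup_right.trans ((normal_subgroupOf_iff_le_normalizer le_sup_left).1 hMnormal)
    have hone : (centralizer (A : Set G)).index = 1 := by
      simpa using index_centralizer_dvd_relIndex hM hdisj le_rfl hAM
    exact ⟨hA.prime_card_of_centralizer_eq_top (index_eq_one.1 hone), 2, Nat.prime_two,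
      hone ▸ one_dvd _⟩
  set S := M ⊔ A
  let D := (M.subgroupOf S).normalCore.map S.subtype
  have hMS : (M.subgroupOf S).map S.subtype = M := map_subgroupOf_eq_of_le le_sup_left
  have hDM : D ≤ M := hMS ▸ map_mono (normalCore_le _)
  have hAD : A ≤ normalizer (D : Set G) := by
    refine le_sup_right.trans
      ((normal_subgroupOf_iff_le_normalizer (hDM.trans le_sup_left)).1 ?_)
    rw [subgroupOf, comap_map_eq_self_of_injective S.subtype_injective]
    infer_instance
  have hDrel : D.relIndex M = (M.subgroupOf S).normalCore.relIndex (M.subgroupOf S) := by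
    rw [← relIndex_map_map_of_injective _ _ S.subtype_injective, hMS]
  refine ⟨?_, q, hq, (index_centralizer_dvd_relIndex hM hdisj hDM hAD).trans (hDrel ▸ hrel)⟩
  rwa [← relIndex_eq_card_of_disjoint hdisj, ← relIndex_sup_of_normal_right, relIndex, hindex]

theorem IsMinimalNormal.isKPrimary_of_kSubmodularIn [Finite A] (hA : IsMinimalNormal A)
    {M : Subgroup G} (hM : M ⊔ centralizer (A : Set G) = ⊤) (hdisj : Disjoint M A)
    (h : KSubmodularIn k M (M ⊔ A)) : IsKPrimary k A := by
  have hne : M ≠ M ⊔ A := fun heq =>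
    hA.ne_bot (hdisj.symm.eq_bot_of_le (left_eq_sup.1 heq))
  obtain ⟨W, hMW, hW, hstep⟩ := h.exists_step_of_ne hne
  obtain rfl := (hA.eq_or_eq_sup_of_le hM hMW hstep.1).resolve_right hW
  exact hA.isKPrimary_of_kModularStep hM hdisj hstep

theorem AllKSubmodular.isKPrimary [Finite G] (h : AllKSubmodular k G) (hA : IsMinimalNormal A) :
    IsKPrimary k A := by
  induction hn : Nat.card G using Nat.strong_induction_on generalizing G with
  | _ n ih =>
  subst hn
  have := hA.normal
  have : Nontrivial G := nontrivial_iff.1 ⟨A, ⊥, hA.ne_bot⟩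
  obtain ⟨s, _, T, hTnormal, hT⟩ := h.exists_normal_sylow
  obtain hdisj | hAT := hA.disjoint_or_le (T : Subgroup G)
  · exact hA.isKPrimary_of_quotient hdisj fun B hB =>
      ih _ (index_lt_card_of_ne_bot hT) (h.of_surjective (QuotientGroup.mk'_surjective _)) hB rfl
  · obtain ⟨M, hTM⟩ := exists_right_complement'_of_coprime T.card_coprime_index
    have : Group.IsNilpotent T := T.2.isNilpotent
    have hcent : (T : Subgroup G) ≤ centralizer (A : Set G) := hA.le_centralizer_of_isNilpotent hAT
    have hM : M ⊔ centralizer (A : Set G) = ⊤ :=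
      top_le_iff.1 (hTM.symm.sup_eq_top ▸ sup_le_sup_left hcent M)
    exact hA.isKPrimary_of_kSubmodularIn hM (hTM.symm.disjoint.mono_right hAT)
      (h.kSubmodularIn_of_le le_sup_left)

end Primary

section Formation

variable {G : Type*} [Group G] {k : ℕ}

theorem kSubmodularIn_sup_of_isKPrimary (hk : 0 < k) {L : Subgroup G} [L.Normal]
    (hL : IsKPrimary k L) (H : Subgroup G) : KSubmodularIn k H (H ⊔ L) := by
  obtain ⟨hprime, q, hq, hdvd⟩ := hL
  set C := centralizer (L : Set G)
  have hle : H ⊓ C ≤ H ⊔ L := inf_le_left.trans le_sup_left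
  have : ((H ⊓ C).subgroupOf (H ⊔ L)).Normal := by
    rw [normal_subgroupOf_iff_le_normalizer hle]
    refine sup_le ?_ ?_
    · exact (le_inf le_normalizer le_normalizer_of_normal).trans inf_normalizer_le_normalizer_inf
    · exact (le_centralizer_iff.1 inf_le_right).trans (centralizer_le_normalizer _)
  have hindex : H.relIndex (H ⊔ L) ∣ Nat.card L :=
    relIndex_sup_of_normal_right H L ▸ relIndex_dvd_card H L
  have hrel : (H ⊓ C).relIndex H ∣ q ^ k := by
    rw [inf_relIndex_left]
    exact (relIndex_dvd_index_of_normal C H).trans hdvd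
  refine .of_subgroupOf le_sup_left (kSubmodularIn_top_of_index_dvd hk hprime hq
    (D := (H ⊓ C).subgroupOf (H ⊔ L)) (subgroupOf_mono _ inf_le_left) ?_ ?_ ?_)
  · rw [← relIndex, ← relIndex_mul_relIndex _ H _ inf_le_left le_sup_left, mul_comm]
    exact mul_dvd_mul hindex hrel
  · rwa [relIndex_subgroupOf le_sup_left]
  · exact Nat.le_of_dvd hprime.pos hindex

theorem AllKSubmodular.of_quotient_isKPrimary (hk : 0 < k) {L : Subgroup G} [L.Normal]
    (hL : IsKPrimary k L) (h : AllKSubmodular k (G ⧸ L)) : AllKSubmodular k G := fun H => by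
  have hsup := (h (H.map (QuotientGroup.mk' L))).comap (QuotientGroup.mk' L)
  rw [comap_map_eq, QuotientGroup.ker_mk', comap_top] at hsup
  exact (kSubmodularIn_sup_of_isKPrimary hk hL H).trans hsup

theorem finite_of_disjoint_of_finiteIndex {N₁ N₂ : Subgroup G} [N₂.FiniteIndex]
    (h : Disjoint N₂ N₁) : Finite N₁ :=
  Nat.finite_of_card_ne_zero <| relIndex_eq_card_of_disjoint h ▸
    (inferInstance : (N₂.subgroupOf N₁).FiniteIndex).index_ne_zero

theorem finiteIndex_map_of_surjective {G' : Type*} [Group G'] (N : Subgroup G) [N.FiniteIndex]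
    {f : G →* G'} (hf : Function.Surjective f) : (N.map f).FiniteIndex :=
  ⟨ne_zero_of_dvd_ne_zero FiniteIndex.index_ne_zero (N.index_map_dvd hf)⟩

theorem AllKSubmodular.of_disjoint (hk : 0 < k) {N₁ N₂ : Subgroup G} [N₁.Normal] [N₂.Normal]
    [N₂.FiniteIndex] (hdisj : Disjoint N₁ N₂) (h₁ : AllKSubmodular k (G ⧸ N₁))
    (h₂ : AllKSubmodular k (G ⧸ N₂)) : AllKSubmodular k G := by
  induction hn : Nat.card N₁ using Nat.strong_induction_on generalizing G with
  | _ n ih =>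
  subst hn
  have := finite_of_disjoint_of_finiteIndex hdisj.symm
  obtain rfl | hne := eq_or_ne N₁ ⊥
  · exact h₁.of_surjective (f := QuotientGroup.quotientBot.toMonoidHom)
      QuotientGroup.quotientBot.surjective
  obtain ⟨L, hLN, hL⟩ := exists_isMinimalNormal_le hne
  have := hL.normal
  have hprimary : IsKPrimary k L :=
    hL.isKPrimary_of_quotient (hdisj.symm.mono_right hLN) fun _ hB => h₂.isKPrimary hB
  have hcard : Nat.card (N₁.map (QuotientGroup.mk' L)) < Nat.card N₁ := by
    rw [← relIndex_ker, QuotientGroup.ker_mk']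
    exact relIndex_lt_card_of_ne_bot hLN hL.ne_bot
  have := finiteIndex_map_of_surjective N₂ (QuotientGroup.mk'_surjective L)
  exact .of_quotient_isKPrimary hk hprimary <|
    ih _ hcard (disjoint_map_mk' hLN (hdisj.le_bot.trans bot_le))
      (h₁.quotient_map_mk' L) (h₂.quotient_map_mk' L) rfl

theorem AllKSubmodular.quotient_inf (hk : 0 < k) {N₁ N₂ : Subgroup G} [N₁.Normal] [N₂.Normal]
    [N₂.FiniteIndex] (h₁ : AllKSubmodular k (G ⧸ N₁)) (h₂ : AllKSubmodular k (G ⧸ N₂)) :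
    AllKSubmodular k (G ⧸ (N₁ ⊓ N₂)) :=
  have := finiteIndex_map_of_surjective N₂ (QuotientGroup.mk'_surjective (N₁ ⊓ N₂))
  .of_disjoint hk (disjoint_map_mk' inf_le_left le_rfl) (h₁.quotient_map_mk' (N₁ ⊓ N₂))
    (h₂.quotient_map_mk' (N₁ ⊓ N₂))

end Formation

theorem kSubmodular_class_hereditary_formation_general (k : ℕ) (hk : 0 < k) :
    (∀ (G : Type*) [Group G], AllKSubmodular k G → ∀ U : Subgroup G, AllKSubmodular k U) ∧
    (∀ (G : Type*) [Group G], AllKSubmodular k G →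
      ∀ (N : Subgroup G) [N.Normal], AllKSubmodular k (G ⧸ N)) ∧
    (∀ (G : Type*) [Group G] (N₁ N₂ : Subgroup G) [N₁.Normal] [N₂.Normal] [N₂.FiniteIndex],
      AllKSubmodular k (G ⧸ N₁) → AllKSubmodular k (G ⧸ N₂) →
        AllKSubmodular k (G ⧸ (N₁ ⊓ N₂))) :=
  ⟨fun _ _ h U => h.of_injective U.subtype_injective,
    fun _ _ h N _ => h.of_surjective (QuotientGroup.mk'_surjective N),
    fun _ _ _ _ _ _ _ h₁ h₂ => h₁.quotient_inf hk h₂⟩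

/-- Theorem 3(2): the class of finite groups all of whose subgroups are
`k`-submodular is a hereditary formation: closed under subgroups, quotients,
and subdirect products (quotients by intersections of two normal subgroups). -/
theorem kSubmodular_class_hereditary_formation (k : ℕ) (hk : 0 < k) :
    (∀ (G : Type) [Group G] [Finite G],
      (∀ H : Subgroup G, KSubmodularIn k H ⊤) →
        ∀ (U : Subgroup G) (H : Subgroup ↥U), KSubmodularIn k H ⊤) ∧
    (∀ (G : Type) [Group G] [Finite G],
      (∀ H : Subgroup G, KSubmodularIn k H ⊤) →
        ∀ (N : Subgroup G) [N.Normal],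
          ∀ H : Subgroup (G ⧸ N), KSubmodularIn k H ⊤) ∧
    (∀ (G : Type) [Group G] [Finite G] (N₁ N₂ : Subgroup G)
        [N₁.Normal] [N₂.Normal],
      (∀ H : Subgroup (G ⧸ N₁), KSubmodularIn k H ⊤) →
      (∀ H : Subgroup (G ⧸ N₂), KSubmodularIn k H ⊤) →
        ∀ H : Subgroup (G ⧸ (N₁ ⊓ N₂)), KSubmodularIn k H ⊤) := by
  obtain ⟨hsub, hquot, hinf⟩ := kSubmodular_class_hereditary_formation_general k hk
  exact ⟨fun G _ _ => hsub G, fun G _ _ => hquot G, fun G _ _ N₁ N₂ _ _ => hinf G N₁ N₂⟩
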